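/- There exists a 5-piece dissection of the square of side √3 into a unit square and a square of side √2: there are five closed subsets P₁,…,P₅ of ℝ² whose union is [0,√3]×[0,√3], with pairwise disjoint interiors, where P₁ is isometric to the unit square [0,1]×[0,1], together with five isometries g₁,…,g₅ of ℝ² such that the images gᵢ(Pᵢ) have pairwise disjoint interiors, g₁(P₁) = [0,1]×[0,1], and the union of the five images is the union of the two disjoint squares [0,1]×[0,1] and [2,2+√2]×[0,√2]. -/

import Mathlib

open Real Set

/-- The plane. -/
abbrev Plane := EuclideanSpace ℝ (Fin 2)

/-- The axis-aligned closed rectangle `[a,b] × [c,d]` in the plane. -/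
noncomputable def rect (a b c d : ℝ) : Set Plane :=
  {p | p 0 ∈ Set.Icc a b ∧ p 1 ∈ Set.Icc c d}

/-!
For `0 ≤ c ≤ d`, cut the square of side `d` into four congruent quarters by two perpendicular lines
through its centre, parallel to the sides of a tilted square of area `c ^ 2 + d ^ 2`. When each
quarter is translated so that its vertex at the centre becomes a vertex of the tilted square, the
quarters fill that square up to a central hole, an axis-parallel square of side `c`: this is
Perigal's dissection, which for `c = 1` and `d = √2` is Abū'l-Wafā's trisection. A quarter turn
permutes the four quarters in both positions, so covering and disjointness of interiors need to be
checked for one of them only.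
-/

open Function
open scoped RealInnerProductSpace

/-- The pieces obtained from `A` by following `f`, a turn by one `n`-th of a full revolution:
the `k`-th piece consists of the points that `k` turns carry into `A`. -/
def pinwheel {X : Type*} (f : X → X) (n : ℕ) (A : Set X) (k : Fin n) : Set X := f^[k] ⁻¹' A

lemma preimage_iterate_eq_self {X : Type*} {f : X → X} {S : Set X} (hS : f ⁻¹' S = S) (k : ℕ) :
    f^[k] ⁻¹' S = S := by
  rw [preimage_iterate_eq]
  exact iterate_fixed hS k

lemma iUnion_pinwheel_subset {X : Type*} {f : X → X} {n : ℕ} {A S : Set X} (hS : f ⁻¹' S = S)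
    (hA : A ⊆ S) : ⋃ k, pinwheel f n A k ⊆ S :=
  iUnion_subset fun k ↦ (preimage_mono hA).trans_eq (preimage_iterate_eq_self hS k)

section Tiling

variable {X : Type*} [TopologicalSpace X]

/-- The closed sets `P i` tile `S`: they cover it exactly and overlap only along their
boundaries. A dissection is a tiling whose pieces are moved to another tiling by isometries. -/
structure IsTiling {ι : Type*} (P : ι → Set X) (S : Set X) : Prop where
  isClosed : ∀ i, IsClosed (P i)
  disjoint_interior : Pairwise (Disjoint on fun i ↦ interior (P i))
  iUnion_eq : ⋃ i, P i = S

lemma IsTiling.image {ι Y : Type*} [TopologicalSpace Y] {P : ι → Set X} {S : Set X}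
    (h : IsTiling P S) (e : X ≃ₜ Y) : IsTiling (fun i ↦ e '' P i) (e '' S) where
  isClosed i := e.isClosed_image.mpr (h.isClosed i)
  disjoint_interior i j hij := by
    simp only [Function.onFun, ← e.image_interior]
    exact (disjoint_image_iff e.injective).mpr (h.disjoint_interior hij)
  iUnion_eq := by rw [← image_iUnion, h.iUnion_eq]

lemma IsTiling.cons {n : ℕ} {P : Fin n → Set X} {A S : Set X} (h : IsTiling P S)
    (hA : IsClosed A) (hAP : ∀ i, Disjoint (interior A) (interior (P i))) :
    IsTiling (Fin.cons A P : Fin (n + 1) → Set X) (A ∪ S) where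
  isClosed := Fin.cases hA h.isClosed
  disjoint_interior i j hij := by
    cases i using Fin.cases <;> cases j using Fin.cases
    · exact absurd rfl hij
    · exact hAP _
    · exact (hAP _).symm
    · exact h.disjoint_interior (ne_of_apply_ne Fin.succ hij)
  iUnion_eq := by
    ext x
    simp [← h.iUnion_eq]

lemma interior_preimage_iterate {f : X → X} (hf : Continuous f) (hf' : IsOpenMap f) (A : Set X)
    (k : ℕ) : interior (f^[k] ⁻¹' A) = f^[k] ⁻¹' interior A := by
  induction k with
  | zero => rfl
  | succ k ih =>
    rw [iterate_succ, preimage_comp, preimage_comp, ← ih,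
      hf'.preimage_interior_eq_interior_preimage hf]

lemma disjoint_interior_pinwheel {f : X → X} {n : ℕ} {A S : Set X} (hf : Continuous f)
    (hf' : IsOpenMap f) (hS : f ⁻¹' S = S) (hSA : Disjoint (interior S) (interior A)) (k : Fin n) :
    Disjoint (interior S) (interior (pinwheel f n A k)) := by
  rw [← preimage_iterate_eq_self hS k, pinwheel, interior_preimage_iterate hf hf',
    interior_preimage_iterate hf hf']
  exact hSA.preimage _

/-- By symmetry it suffices to compare `A` with the pieces at most half a revolution away. -/
lemma isTiling_pinwheel {f : X → X} {n : ℕ} {A : Set X} (hf : Continuous f) (hf' : IsOpenMap f)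
    (hfn : f^[n] = id) (hA : IsClosed A)
    (h : ∀ k, 0 < k → 2 * k ≤ n → Disjoint (interior A) (interior (f^[k] ⁻¹' A))) :
    IsTiling (pinwheel f n A) (⋃ k, pinwheel f n A k) where
  isClosed k := hA.preimage (hf.iterate k)
  disjoint_interior := by
    have turned (k l : ℕ) (hk : 0 < k) (hkn : 2 * k ≤ n) :
        Disjoint (interior (f^[l] ⁻¹' A)) (interior (f^[k + l] ⁻¹' A)) := by
      rw [iterate_add, preimage_comp, interior_preimage_iterate hf hf',
        interior_preimage_iterate hf hf' _ l]
      exact (h k hk hkn).preimage _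
    refine (pairwise_disjoint_on _).mpr fun i j hij ↦ ?_
    rcases le_total (2 * (j - i : ℕ)) n with hle | hle
    · simpa [pinwheel, Nat.sub_add_cancel hij.le] using turned (j - i) i (by lia) hle
    · have hwrap : n - (j - i) + j = i + n := by lia
      simpa [pinwheel, hwrap, iterate_add, hfn] using
        (turned (n - (j - i)) j (by lia) (by lia)).symm
  iUnion_eq := rfl

end Tiling

lemma disjoint_interior_of_separated {E : Type*} [NormedAddCommGroup E] [InnerProductSpace ℝ E]
    {A B : Set E} {v : E} {m : ℝ} (hv : v ≠ 0) (hA : ∀ p ∈ A, m ≤ ⟪v, p⟫)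
    (hB : ∀ p ∈ B, ⟪v, p⟫ ≤ m) : Disjoint (interior A) (interior B) := by
  have hopen : IsOpenMap (innerSL ℝ v) :=
    (innerSL ℝ v).isOpenMap_of_ne_zero fun h ↦ hv (by simpa using congr($h v))
  have hpre := hopen.preimage_interior_eq_interior_preimage (innerSL ℝ v).continuous
  have hA' : interior A ⊆ innerSL ℝ v ⁻¹' Ioi m := by
    rw [← interior_Ici, hpre]
    exact interior_mono hA
  have hB' : interior B ⊆ innerSL ℝ v ⁻¹' Iio m := by
    rw [← interior_Iic, hpre]
    exact interior_mono hB
  exact (Disjoint.preimage _ Ioi_disjoint_Iio_same).mono hA' hB'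

lemma inner_vec_two (a b : ℝ) (p : Plane) : ⟪!₂[a, b], p⟫ = a * p 0 + b * p 1 := by
  simp [PiLp.inner_apply, Fin.sum_univ_two, mul_comm]

lemma disjoint_interior_of_vertical_line {A B : Set Plane} {m : ℝ} (hA : ∀ p ∈ A, m ≤ p 0)
    (hB : ∀ p ∈ B, p 0 ≤ m) : Disjoint (interior A) (interior B) := by
  have hv : (!₂[1, 0] : Plane) ≠ 0 := fun h ↦ one_ne_zero congr($h 0)
  refine disjoint_interior_of_separated hv (m := m) ?_ ?_ <;> simpa [inner_vec_two]

/-- The rotation of the plane whose cosine is `a` and whose sine is `b`. -/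
noncomputable def planeRotation (a b : ℝ) (h : a ^ 2 + b ^ 2 = 1) : Plane ≃ₗᵢ[ℝ] Plane :=
  LinearIsometry.toLinearIsometryEquiv
    { toFun p := !₂[a * p 0 - b * p 1, b * p 0 + a * p 1]
      map_add' p q := by ext i; fin_cases i <;> simp <;> ring
      map_smul' r p := by ext i; fin_cases i <;> simp <;> ring
      norm_map' p := by
        simp only [EuclideanSpace.norm_eq, Fin.sum_univ_two, Real.norm_eq_abs, sq_abs]
        congr 1
        simp only [LinearMap.coe_mk, AddHom.coe_mk, Matrix.cons_val_zero, Matrix.cons_val_one,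
          Matrix.cons_val_fin_one]
        linear_combination (p 0 ^ 2 + p 1 ^ 2) * h } rfl

/-- The clockwise rotation by a right angle. -/
noncomputable def quarterTurn : Plane ≃ₗᵢ[ℝ] Plane := planeRotation 0 (-1) (by norm_num)

@[simp] lemma quarterTurn_apply_zero (p : Plane) : quarterTurn p 0 = p 1 := by
  simp [quarterTurn, planeRotation]

@[simp] lemma quarterTurn_apply_one (p : Plane) : quarterTurn p 1 = -p 0 := by
  simp [quarterTurn, planeRotation]

lemma quarterTurn_iterate_four : quarterTurn^[4] = id := by
  ext p i
  fin_cases i <;> simp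

lemma isTiling_pinwheel_quarterTurn {A : Set Plane} {v : Plane} {m : ℝ} (hA : IsClosed A)
    (hv : v ≠ 0) (h₀ : ∀ p ∈ A, m ≤ ⟪v, p⟫) (h₁ : ∀ p, quarterTurn p ∈ A → ⟪v, p⟫ ≤ m)
    (h₂ : ∀ p, quarterTurn (quarterTurn p) ∈ A → ⟪v, p⟫ ≤ m) :
    IsTiling (pinwheel quarterTurn 4 A) (⋃ k, pinwheel quarterTurn 4 A k) := by
  refine isTiling_pinwheel quarterTurn.continuous quarterTurn.toHomeomorph.isOpenMap
    quarterTurn_iterate_four hA fun k hk hk4 ↦ disjoint_interior_of_separated hv h₀ ?_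
  obtain rfl | rfl : k = 1 ∨ k = 2 := by lia
  · exact h₁
  · exact h₂

lemma mem_iUnion_pinwheel_quarterTurn {A : Set Plane} {p : Plane} :
    p ∈ ⋃ k, pinwheel quarterTurn 4 A k ↔ p ∈ A ∨ quarterTurn p ∈ A ∨
      quarterTurn (quarterTurn p) ∈ A ∨ quarterTurn (quarterTurn (quarterTurn p)) ∈ A := by
  simp [pinwheel, Fin.exists_fin_succ]

/-- The axis-parallel closed square of side `r` centred at the origin. -/
def centeredSquare (r : ℝ) : Set Plane := {p | |p 0| ≤ r / 2 ∧ |p 1| ≤ r / 2}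

lemma quarterTurn_preimage_centeredSquare (r : ℝ) :
    quarterTurn ⁻¹' centeredSquare r = centeredSquare r := by
  ext p
  simp [centeredSquare, and_comm]

lemma isClosed_centeredSquare (r : ℝ) : IsClosed (centeredSquare r) :=
  .and (isClosed_le (by fun_prop) (by fun_prop)) (isClosed_le (by fun_prop) (by fun_prop))

lemma addRight_image {E : Type*} [SeminormedAddCommGroup E] (v : E) (S : Set E) :
    IsometryEquiv.addRight v '' S = (· - v) ⁻¹' S := by
  simp [sub_eq_add_neg]

/-- The centre of the axis-parallel square of side `r` with lower left vertex `(x, y)`. -/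
noncomputable def squareCenter (x y r : ℝ) : Plane := !₂[x + r / 2, y + r / 2]

lemma addRight_squareCenter_image (x y r : ℝ) :
    IsometryEquiv.addRight (squareCenter x y r) '' centeredSquare r =
      rect x (x + r) y (y + r) := by
  rw [addRight_image]
  ext p
  simp only [centeredSquare, squareCenter, rect, abs_le, mem_preimage, mem_ofPred_eq, mem_Icc,
    PiLp.sub_apply, Matrix.cons_val_zero, Matrix.cons_val_one, Matrix.cons_val_fin_one]
  grind

section Perigal

variable {c d : ℝ}

/-- The quarter of `centeredSquare d` containing its lower left vertex, when the square is cut by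
the two perpendicular lines of slopes `d / c` and `-c / d` through its centre. -/
def quarterSquare (c d : ℝ) : Set Plane :=
  {p | -(d / 2) ≤ p 0 ∧ -(d / 2) ≤ p 1 ∧ d * p 0 - c * p 1 ≤ 0 ∧ c * p 0 + d * p 1 ≤ 0}

/-- The square of area `c ^ 2 + d ^ 2` centred at the origin whose sides are parallel to the cuts
that bound `quarterSquare c d`. -/
def tiltedSquare (c d : ℝ) : Set Plane :=
  {p | |d * p 0 - c * p 1| ≤ (c ^ 2 + d ^ 2) / 2 ∧ |c * p 0 + d * p 1| ≤ (c ^ 2 + d ^ 2) / 2}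

lemma quarterTurn_preimage_tiltedSquare (c d : ℝ) :
    quarterTurn ⁻¹' tiltedSquare c d = tiltedSquare c d := by
  ext p
  have hneg : |c * p 1 - d * p 0| = |d * p 0 - c * p 1| := abs_sub_comm _ _
  have hcomm : d * p 1 + c * p 0 = c * p 0 + d * p 1 := add_comm _ _
  simp [tiltedSquare, ← sub_eq_add_neg, hneg, hcomm, and_comm]

/-- The vertex of `tiltedSquare c d` that lies in `cornerPiece c d`. Translation by this vector
carries `quarterSquare c d` to `cornerPiece c d`. -/
noncomputable def apex (c d : ℝ) : Plane := !₂[(c + d) / 2, (d - c) / 2]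

/-- The quadrilateral at a vertex of `tiltedSquare c d` bounded by two of its sides and by the
lines extending two sides of `centeredSquare c`. -/
def cornerPiece (c d : ℝ) : Set Plane :=
  {p | c / 2 ≤ p 0 ∧ -(c / 2) ≤ p 1 ∧
    d * p 0 - c * p 1 ≤ (c ^ 2 + d ^ 2) / 2 ∧ c * p 0 + d * p 1 ≤ (c ^ 2 + d ^ 2) / 2}

lemma isClosed_cornerPiece (c d : ℝ) : IsClosed (cornerPiece c d) := by
  refine .and ?_ (.and ?_ (.and ?_ ?_)) <;> exact isClosed_le (by fun_prop) (by fun_prop)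

lemma isClosed_quarterSquare (c d : ℝ) : IsClosed (quarterSquare c d) := by
  refine .and ?_ (.and ?_ (.and ?_ ?_)) <;> exact isClosed_le (by fun_prop) (by fun_prop)

lemma add_apex_mem_cornerPiece {p : Plane} :
    p + apex c d ∈ cornerPiece c d ↔ p ∈ quarterSquare c d := by
  simp only [cornerPiece, quarterSquare, apex, mem_ofPred_eq, PiLp.add_apply, Matrix.cons_val_zero,
    Matrix.cons_val_one, Matrix.cons_val_fin_one]
  grind

lemma iUnion_pinwheel_quarterSquare (hc : 0 ≤ c) (hd : 0 < d) (hcd : c ≤ d) :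
    ⋃ k, pinwheel quarterTurn 4 (quarterSquare c d) k = centeredSquare d := by
  apply subset_antisymm
  · refine iUnion_pinwheel_subset (quarterTurn_preimage_centeredSquare d) ?_
    rintro p ⟨hx, hy, h₁, h₂⟩
    have hx' : p 0 ≤ d / 2 := by nlinarith
    have hy' : p 1 ≤ d / 2 := by nlinarith
    exact ⟨abs_le.mpr ⟨hx, hx'⟩, abs_le.mpr ⟨hy, hy'⟩⟩
  · rintro p ⟨hx, hy⟩
    obtain ⟨hx₁, hx₂⟩ := abs_le.mp hx
    obtain ⟨hy₁, hy₂⟩ := abs_le.mp hy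
    rw [mem_iUnion_pinwheel_quarterTurn]
    simp only [quarterSquare, mem_ofPred_eq, quarterTurn_apply_zero, quarterTurn_apply_one]
    rcases le_total (d * p 0 - c * p 1) 0 with h₁ | h₁ <;>
      rcases le_total (c * p 0 + d * p 1) 0 with h₂ | h₂
    · exact .inl ⟨by linarith, by linarith, by linarith, by linarith⟩
    · exact .inr (.inr (.inr ⟨by linarith, by linarith, by linarith, by linarith⟩))
    · exact .inr (.inl ⟨by linarith, by linarith, by linarith, by linarith⟩)
    · exact .inr (.inr (.inl ⟨by linarith, by linarith, by linarith, by linarith⟩))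

lemma isTiling_quarterSquare (hc : 0 ≤ c) (hd : 0 < d) (hcd : c ≤ d) :
    IsTiling (pinwheel quarterTurn 4 (quarterSquare c d)) (centeredSquare d) := by
  rw [← iUnion_pinwheel_quarterSquare hc hd hcd]
  refine isTiling_pinwheel_quarterTurn (v := !₂[-d, c]) (m := 0) (isClosed_quarterSquare c d)
    (fun h ↦ hd.ne' (by simpa using congr($h 0))) ?_ ?_ ?_ <;>
  · rintro p ⟨-, -, h₁, h₂⟩
    simp only [inner_vec_two, quarterTurn_apply_zero, quarterTurn_apply_one] at *
    linarith

lemma iUnion_pinwheel_cornerPiece (hc : 0 ≤ c) (hd : 0 < d) (hcd : c ≤ d) :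
    centeredSquare c ∪ ⋃ k, pinwheel quarterTurn 4 (cornerPiece c d) k = tiltedSquare c d := by
  apply subset_antisymm
  · refine union_subset ?_ (iUnion_pinwheel_subset (quarterTurn_preimage_tiltedSquare c d) ?_)
    · rintro p ⟨hx, hy⟩
      obtain ⟨hx₁, hx₂⟩ := abs_le.mp hx
      obtain ⟨hy₁, hy₂⟩ := abs_le.mp hy
      constructor <;> rw [abs_le] <;> constructor <;> nlinarith
    · rintro p ⟨hx, hy, h₁, h₂⟩
      have hy' : p 1 ≤ d / 2 := by nlinarith
      refine ⟨abs_le.mpr ⟨?_, h₁⟩, abs_le.mpr ⟨?_, h₂⟩⟩ <;> nlinarith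
  · rintro p ⟨h₁, h₂⟩
    obtain ⟨h₁, h₁'⟩ := abs_le.mp h₁
    obtain ⟨h₂, h₂'⟩ := abs_le.mp h₂
    rw [mem_union, mem_iUnion_pinwheel_quarterTurn]
    simp only [centeredSquare, cornerPiece, abs_le, mem_ofPred_eq, quarterTurn_apply_zero,
      quarterTurn_apply_one]
    have hquadrant : ((-(c / 2) ≤ p 0 ∧ p 0 ≤ c / 2) ∧ (-(c / 2) ≤ p 1 ∧ p 1 ≤ c / 2)) ∨
        (c / 2 ≤ p 0 ∧ -(c / 2) ≤ p 1) ∨ (p 0 ≤ c / 2 ∧ c / 2 ≤ p 1) ∨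
        (p 0 ≤ -(c / 2) ∧ p 1 ≤ c / 2) ∨ (-(c / 2) ≤ p 0 ∧ p 1 ≤ -(c / 2)) := by
      grind
    rcases hquadrant with hhole | hq | hq | hq | hq
    · exact .inl hhole
    · exact .inr (.inl ⟨hq.1, hq.2, by linarith, by linarith⟩)
    · exact .inr (.inr (.inl ⟨by linarith, by linarith, by linarith, by linarith⟩))
    · exact .inr (.inr (.inr (.inl ⟨by linarith, by linarith, by linarith, by linarith⟩)))
    · exact .inr (.inr (.inr (.inr ⟨by linarith, by linarith, by linarith, by linarith⟩)))

/-- The pieces of the dissection of `tiltedSquare c d`, the first being the square of side `c`. -/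
def perigalPiece (c d : ℝ) : Fin 5 → Set Plane :=
  Fin.cons (centeredSquare c) (pinwheel quarterTurn 4 (cornerPiece c d))

lemma isTiling_perigalPiece (hc : 0 ≤ c) (hd : 0 < d) (hcd : c ≤ d) :
    IsTiling (perigalPiece c d) (tiltedSquare c d) := by
  rw [← iUnion_pinwheel_cornerPiece hc hd hcd]
  have hcorners : IsTiling (pinwheel quarterTurn 4 (cornerPiece c d))
      (⋃ k, pinwheel quarterTurn 4 (cornerPiece c d) k) := by
    refine isTiling_pinwheel_quarterTurn (v := !₂[1, 0]) (m := c / 2) (isClosed_cornerPiece c d)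
      (fun h ↦ one_ne_zero congr($h 0)) ?_ ?_ ?_ <;>
    · rintro p ⟨hx, hy, -, -⟩
      simp only [inner_vec_two, quarterTurn_apply_zero, quarterTurn_apply_one] at *
      linarith
  have hcenter : Disjoint (interior (centeredSquare c)) (interior (cornerPiece c d)) :=
    (disjoint_interior_of_vertical_line (fun _ hp ↦ hp.1) fun _ hp ↦ (abs_le.mp hp.1).2).symm
  exact hcorners.cons (isClosed_centeredSquare c) (disjoint_interior_pinwheel
    quarterTurn.continuous quarterTurn.toHomeomorph.isOpenMap
    (quarterTurn_preimage_centeredSquare c) hcenter)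

/-- The rotation that makes `tiltedSquare c d` axis-parallel. -/
noncomputable def straighten (h : 0 < c ^ 2 + d ^ 2) : Plane ≃ₗᵢ[ℝ] Plane :=
  planeRotation (d / √(c ^ 2 + d ^ 2)) (c / √(c ^ 2 + d ^ 2)) (by
    rw [div_pow, div_pow, Real.sq_sqrt h.le, ← add_div, add_comm, div_self h.ne'])

lemma straighten_image_tiltedSquare (h : 0 < c ^ 2 + d ^ 2) :
    straighten h '' tiltedSquare c d = centeredSquare √(c ^ 2 + d ^ 2) := by
  have hpos : 0 < √(c ^ 2 + d ^ 2) := Real.sqrt_pos.mpr h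
  suffices straighten h ⁻¹' centeredSquare √(c ^ 2 + d ^ 2) = tiltedSquare c d by
    rw [← this, image_preimage_eq _ (straighten h).surjective]
  have hscale (t : ℝ) : |t / √(c ^ 2 + d ^ 2)| ≤ √(c ^ 2 + d ^ 2) / 2 ↔
      |t| ≤ (c ^ 2 + d ^ 2) / 2 := by
    rw [abs_div, abs_of_pos hpos, div_le_iff₀ hpos, div_mul_eq_mul_div, Real.mul_self_sqrt h.le]
  ext p
  simp only [centeredSquare, tiltedSquare, mem_preimage, mem_ofPred_eq, ← hscale]
  simp [straighten, planeRotation, div_mul_eq_mul_div, sub_div, add_div]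

lemma addRight_image_pinwheel_cornerPiece (x : Plane) (k : Fin 4) :
    IsometryEquiv.addRight (x - quarterTurn.symm^[k] (apex c d)) ''
        pinwheel quarterTurn 4 (cornerPiece c d) k =
      IsometryEquiv.addRight x '' pinwheel quarterTurn 4 (quarterSquare c d) k := by
  ext p
  have hinv : quarterTurn^[k] (quarterTurn.symm^[k] (apex c d)) = apex c d :=
    LeftInverse.iterate quarterTurn.apply_symm_apply k _
  rw [addRight_image, addRight_image]
  simp only [pinwheel, mem_preimage, sub_sub_eq_add_sub, add_sub_right_comm, iterate_map_add, hinv,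
    add_apex_mem_cornerPiece]

/-- The translation vectors that take the pieces of `tiltedSquare c d` to the squares of sides
`c` and `d` with lower left vertices `(0, 0)` and `(u, 0)`. -/
noncomputable def perigalShift (c d u : ℝ) : Fin 5 → Plane :=
  Fin.cons (squareCenter 0 0 c) fun k : Fin 4 ↦
    squareCenter u 0 d - quarterTurn.symm^[k] (apex c d)

lemma addRight_image_perigalPiece_zero (c d u : ℝ) :
    IsometryEquiv.addRight (perigalShift c d u 0) '' perigalPiece c d 0 = rect 0 c 0 c :=
  (addRight_squareCenter_image 0 0 c).trans (by rw [zero_add])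

lemma isTiling_addRight_image_perigalPiece {u : ℝ} (hc : 0 ≤ c) (hd : 0 < d) (hcd : c ≤ d)
    (hu : c ≤ u) :
    IsTiling (fun i ↦ IsometryEquiv.addRight (perigalShift c d u i) '' perigalPiece c d i)
      (rect 0 c 0 c ∪ rect u (u + d) 0 d) := by
  have hlarge := (isTiling_quarterSquare hc hd hcd).image
    (IsometryEquiv.addRight (squareCenter u 0 d)).toHomeomorph
  rw [IsometryEquiv.coe_toHomeomorph, addRight_squareCenter_image, zero_add] at hlarge
  have hsmall : IsClosed (rect 0 c 0 c) := by
    rw [← addRight_image_perigalPiece_zero c d u]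
    exact (IsometryEquiv.addRight _).toHomeomorph.isClosed_image.mpr (isClosed_centeredSquare c)
  have hcons : (fun i ↦ IsometryEquiv.addRight (perigalShift c d u i) '' perigalPiece c d i) =
      Fin.cons (rect 0 c 0 c) fun k ↦ IsometryEquiv.addRight (squareCenter u 0 d) ''
        pinwheel quarterTurn 4 (quarterSquare c d) k :=
    funext <| Fin.cases (addRight_image_perigalPiece_zero c d u)
      (addRight_image_pinwheel_cornerPiece (squareCenter u 0 d))
  rw [hcons]
  refine hlarge.cons hsmall fun k ↦ (disjoint_interior_of_vertical_line (m := c) ?_ ?_).symm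
  · intro p hp
    obtain ⟨⟨hx, -⟩, -⟩ := hlarge.iUnion_eq.le (mem_iUnion_of_mem k hp)
    exact hu.trans hx
  · rintro p ⟨⟨-, hx⟩, -⟩
    exact hx

end Perigal

theorem five_piece_dissection_sqrt3_to_one_and_sqrt2_general {c d u : ℝ} (hc : 0 ≤ c) (hd : 0 < d)
    (hcd : c ≤ d) (hu : c ≤ u) :
    ∃ (P : Fin 5 → Set Plane) (g : Fin 5 → (Plane ≃ᵢ Plane)),
      IsTiling P (rect 0 √(c ^ 2 + d ^ 2) 0 √(c ^ 2 + d ^ 2)) ∧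
      g 0 '' P 0 = rect 0 c 0 c ∧
      IsTiling (fun i ↦ g i '' P i) (rect 0 c 0 c ∪ rect u (u + d) 0 d) := by
  have h : 0 < c ^ 2 + d ^ 2 := by positivity
  let e : Plane ≃ᵢ Plane := (straighten h).toIsometryEquiv.trans
    (.addRight (squareCenter 0 0 √(c ^ 2 + d ^ 2)))
  have he : e '' tiltedSquare c d = rect 0 √(c ^ 2 + d ^ 2) 0 √(c ^ 2 + d ^ 2) :=
    calc e '' tiltedSquare c d
      _ = IsometryEquiv.addRight (squareCenter 0 0 √(c ^ 2 + d ^ 2)) ''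
            (straighten h '' tiltedSquare c d) := by
        rw [image_image]
        rfl
      _ = _ := by
        rw [straighten_image_tiltedSquare, addRight_squareCenter_image, zero_add]
  let g (i : Fin 5) : Plane ≃ᵢ Plane := e.symm.trans (.addRight (perigalShift c d u i))
  have hg (i : Fin 5) : g i '' (e '' perigalPiece c d i) =
      IsometryEquiv.addRight (perigalShift c d u i) '' perigalPiece c d i := by
    simp [g, image_image]
  refine ⟨fun i ↦ e '' perigalPiece c d i, g, ?_, ?_, ?_⟩
  · exact he ▸ (isTiling_perigalPiece hc hd hcd).image e.toHomeomorph
  · rw [hg, addRight_image_perigalPiece_zero]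
  · simpa only [hg] using isTiling_addRight_image_perigalPiece hc hd hcd hu

/-- **5-piece dissection of the square of side `√3` into a unit square and a square of side
`√2`.**  There are five closed subsets of the plane with pairwise disjoint interiors whose
union is `[0,√3] × [0,√3]`, where the first piece is isometric to the unit square
`[0,1] × [0,1]`, together with five isometries of the plane such that the images of the
pieces have pairwise disjoint interiors, the image of the first piece is `[0,1] × [0,1]`,
and the union of the five images is the union of the two disjoint squares `[0,1] × [0,1]`
and `[2, 2+√2] × [0,√2]`. -/
theorem five_piece_dissection_sqrt3_to_one_and_sqrt2 :
    ∃ (P : Fin 5 → Set Plane) (g : Fin 5 → (Plane ≃ᵢ Plane)),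
      (∀ i, IsClosed (P i)) ∧
      (⋃ i, P i) = rect 0 (Real.sqrt 3) 0 (Real.sqrt 3) ∧
      (∀ i j, i ≠ j → interior (P i) ∩ interior (P j) = ∅) ∧
      (∃ e : Plane ≃ᵢ Plane, e '' P 0 = rect 0 1 0 1) ∧
      (∀ i j, i ≠ j → interior (g i '' P i) ∩ interior (g j '' P j) = ∅) ∧
      g 0 '' P 0 = rect 0 1 0 1 ∧
      (⋃ i, g i '' P i) =
        rect 0 1 0 1 ∪ rect 2 (2 + Real.sqrt 2) 0 (Real.sqrt 2) := by
  have hcd : (1 : ℝ) ≤ √2 := Real.one_le_sqrt.mpr one_le_two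
  obtain ⟨P, g, hP, hg, hgP⟩ := five_piece_dissection_sqrt3_to_one_and_sqrt2_general
    zero_le_one (by positivity) hcd one_le_two
  have harea : (1 : ℝ) ^ 2 + √2 ^ 2 = 3 := by norm_num
  rw [harea] at hP
  exact ⟨P, g, hP.isClosed, hP.iUnion_eq, fun _ _ h ↦ (hP.disjoint_interior h).inter_eq,
    ⟨g 0, hg⟩, fun _ _ h ↦ (hgP.disjoint_interior h).inter_eq, hg, hgP.iUnion_eq⟩
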